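/- Let $d \ge 2$ be an integer. Let $\sigma_p$ be a positive Borel measure on $(0, \infty)$ with $\sigma_p((0,r]) < \infty$ for every $r > 0$, tempered in the sense that there exist $C, N > 0$ with $\sigma_p((0,r]) \le C(1+r)^N$ for all $r \ge 1$, and let $\sigma_c$ be a finite positive Borel measure on the interval $[0, \tfrac{d-1}{2}]$. Then the following are equivalent: (a) $\sigma_c = 0$ and $\lim_{\varepsilon \to 0^+} \sigma_p((0,\varepsilon])/\varepsilon^3 = 0$; (b) $\lim_{\tau \to +\infty} \tau^{3/2}\Big(\int_{(0,\infty)} e^{-2\tau\lambda^2}\, d\sigma_p(\lambda) + \int_{[0, \frac{d-1}{2}]} e^{2\tau\lambda^2}\, d\sigma_c(\lambda)\Big) = 0$. -/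

import Mathlib

open MeasureTheory Filter

lemma aux_cover (σ : Measure ℝ) (s τ : ℝ) (hs : 0 < s) (hτ : τ * s ^ 2 = 1) :
    (∫⁻ l in Set.Ioi (0 : ℝ), ENNReal.ofReal (Real.exp (-2 * τ * l ^ 2)) ∂σ) ≤
      ∑' n : ℕ, ENNReal.ofReal (Real.exp (-2 * (n : ℝ) ^ 2)) *
        σ (Set.Ioc 0 (((n : ℝ) + 1) * s)) := by
  have hτ0 : 0 < τ := by
    by_contra h
    push Not at h
    nlinarith [mul_nonneg (neg_nonneg.2 h) (sq_nonneg s)]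
  have hsub : Set.Ioi (0 : ℝ) ⊆ ⋃ n : ℕ, Set.Ioc ((n : ℝ) * s) (((n : ℝ) + 1) * s) := by
    intro x hx
    have hx : 0 < x := hx
    have hc : 0 < ⌈x / s⌉₊ := Nat.ceil_pos.2 (by positivity)
    obtain ⟨m, hm⟩ : ∃ m, ⌈x / s⌉₊ = m + 1 := ⟨⌈x / s⌉₊ - 1, by omega⟩
    have h1 := Nat.le_ceil (x / s)
    have h2 : (m : ℝ) < x / s := Nat.lt_ceil.1 (by omega)
    rw [hm] at h1
    push_cast at h1
    exact Set.mem_iUnion.2 ⟨m, (lt_div_iff₀ hs).1 h2, (div_le_iff₀ hs).1 h1⟩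
  refine (lintegral_mono_set hsub).trans ((lintegral_iUnion_le _ _).trans ?_)
  refine ENNReal.tsum_le_tsum fun n => ?_
  have : ∀ l ∈ Set.Ioc ((n : ℝ) * s) (((n : ℝ) + 1) * s),
      ENNReal.ofReal (Real.exp (-2 * τ * l ^ 2)) ≤
        ENNReal.ofReal (Real.exp (-2 * (n : ℝ) ^ 2)) := by
    intro l hl
    apply ENNReal.ofReal_le_ofReal
    apply Real.exp_le_exp.2
    have h1 : ((n : ℝ) * s) ^ 2 ≤ l ^ 2 := pow_le_pow_left₀ (by positivity) hl.1.le 2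
    have h2 := mul_le_mul_of_nonneg_left h1 hτ0.le
    have h3 : τ * ((n : ℝ) * s) ^ 2 = (n : ℝ) ^ 2 := by
      rw [mul_pow, mul_left_comm, hτ, mul_one]
    linarith
  refine (setLIntegral_mono measurable_const this).trans ?_
  rw [setLIntegral_const]
  gcongr
  positivity

lemma aux_bound (G : ℝ → ℝ) (hG0 : ∀ r, 0 ≤ G r)
    (hmono : ∀ a b, a ≤ b → G a ≤ G b)
    (hG : Tendsto (fun ε : ℝ => G ε / ε ^ 3) (nhdsWithin 0 (Set.Ioi 0)) (nhds 0))
    (C N : ℝ) (hC : 0 < C) (htemp : ∀ r, 1 ≤ r → G r ≤ C * (1 + r) ^ N) :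
    ∃ A : ℝ, ∃ M : ℕ, 0 ≤ A ∧ ∀ r, 0 < r → G r ≤ A * (r ^ 3 * (1 + r) ^ M) := by
  have h1 : ∀ᶠ ε in nhdsWithin (0 : ℝ) (Set.Ioi 0), G ε / ε ^ 3 < 1 :=
    hG.eventually (gt_mem_nhds one_pos)
  obtain ⟨r0, hr0, hr⟩ := mem_nhdsGT_iff_exists_Ioo_subset.1 h1
  have hr0 : 0 < r0 := hr0
  have hq : 0 ≤ G 1 / r0 ^ 3 := div_nonneg (hG0 1) (by positivity)
  refine ⟨1 + G 1 / r0 ^ 3 + C, ⌈N⌉₊, by positivity, fun r hrp => ?_⟩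
  have hM : 1 ≤ (1 + r) ^ ⌈N⌉₊ := one_le_pow₀ (by linarith)
  have hr3 : 0 < r ^ 3 := by positivity
  have hX : r ^ 3 ≤ r ^ 3 * (1 + r) ^ ⌈N⌉₊ := le_mul_of_one_le_right hr3.le hM
  set X := r ^ 3 * (1 + r) ^ ⌈N⌉₊ with hXd
  have hX0 : 0 ≤ X := by positivity
  have e1 : 0 ≤ G 1 / r0 ^ 3 * X := by positivity
  have e2 : 0 ≤ C * X := by positivity
  have e3 : (1 + G 1 / r0 ^ 3 + C) * X = X + G 1 / r0 ^ 3 * X + C * X := by ring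
  rw [e3]
  rcases lt_or_ge r r0 with h | h
  · have : G r / r ^ 3 < 1 := hr ⟨hrp, h⟩
    rw [div_lt_one hr3] at this
    linarith
  rcases le_total r 1 with h' | h'
  · have a1 := hmono r 1 h'
    have a2 : r0 ^ 3 ≤ X := (pow_le_pow_left₀ hr0.le h 3).trans hX
    have a3 : G 1 ≤ G 1 / r0 ^ 3 * X := by
      calc G 1 = G 1 / r0 ^ 3 * r0 ^ 3 := by field_simp
        _ ≤ _ := by gcongr
    linarith
  · have a1 := htemp r h'
    have a2 : (1 + r) ^ N ≤ (1 + r) ^ ⌈N⌉₊ := by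
      rw [← Real.rpow_natCast]
      exact Real.rpow_le_rpow_of_exponent_le (by linarith) (Nat.le_ceil N)
    have a3 : (1 + r) ^ ⌈N⌉₊ ≤ X := le_mul_of_one_le_left (by positivity) (one_le_pow₀ h')
    have a4 : C * (1 + r) ^ N ≤ C * X := by gcongr; exact a2.trans a3
    linarith

lemma aux_summable (A : ℝ) (M : ℕ) :
    Summable fun n : ℕ => Real.exp (-2 * (n : ℝ) ^ 2) * (A * ((n : ℝ) + 2) ^ (M + 3)) := by
  have h := (summable_nat_add_iff 2).2
    (Real.summable_pow_mul_exp_neg_nat_mul (M + 3) (r := 2) (by norm_num))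
  have h' := h.mul_left (|A| * Real.exp 4)
  refine Summable.of_norm_bounded h' fun n => ?_
  rw [Real.norm_eq_abs, abs_mul, abs_mul, abs_of_pos (Real.exp_pos _),
    abs_of_nonneg (by positivity : (0 : ℝ) ≤ ((n : ℝ) + 2) ^ (M + 3))]
  have hn : (n : ℝ) ≤ (n : ℝ) ^ 2 := by exact_mod_cast Nat.le_self_pow (by norm_num) n
  have he : Real.exp (-2 * (n : ℝ) ^ 2) ≤
      Real.exp 4 * Real.exp (-2 * ((n + 2 : ℕ) : ℝ)) := by
    rw [← Real.exp_add]
    apply Real.exp_le_exp.2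
    push_cast
    linarith
  calc _ ≤ (Real.exp 4 * Real.exp (-2 * ((n + 2 : ℕ) : ℝ))) *
        (|A| * ((n : ℝ) + 2) ^ (M + 3)) := by gcongr
    _ = _ := by push_cast; ring

lemma aux_dom (G : ℝ → ℝ) (hG0 : ∀ r, 0 ≤ G r)
    (hG : Tendsto (fun ε : ℝ => G ε / ε ^ 3) (nhdsWithin 0 (Set.Ioi 0)) (nhds 0))
    (A : ℝ) (M : ℕ) (hA : 0 ≤ A) (hb : ∀ r, 0 < r → G r ≤ A * (r ^ 3 * (1 + r) ^ M)) :
    (∀ s : ℝ, 0 < s → s ≤ 1 → ∀ n : ℕ,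
      Real.exp (-2 * (n : ℝ) ^ 2) * (G (((n : ℝ) + 1) * s) / s ^ 3) ≤
        Real.exp (-2 * (n : ℝ) ^ 2) * (A * ((n : ℝ) + 2) ^ (M + 3))) ∧
    Tendsto (fun s : ℝ => ∑' n : ℕ,
      Real.exp (-2 * (n : ℝ) ^ 2) * (G (((n : ℝ) + 1) * s) / s ^ 3))
      (nhdsWithin 0 (Set.Ioi 0)) (nhds 0) := by
  have hB : ∀ s : ℝ, 0 < s → s ≤ 1 → ∀ n : ℕ,
      Real.exp (-2 * (n : ℝ) ^ 2) * (G (((n : ℝ) + 1) * s) / s ^ 3) ≤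
        Real.exp (-2 * (n : ℝ) ^ 2) * (A * ((n : ℝ) + 2) ^ (M + 3)) := by
    intro s hs hs1 n
    gcongr
    rw [div_le_iff₀ (by positivity)]
    refine (hb _ (by positivity)).trans ?_
    have h1 : 1 + ((n : ℝ) + 1) * s ≤ (n : ℝ) + 2 := by
      have : ((n : ℝ) + 1) * s ≤ ((n : ℝ) + 1) * 1 := by gcongr
      linarith
    calc A * ((((n : ℝ) + 1) * s) ^ 3 * (1 + ((n : ℝ) + 1) * s) ^ M)
        ≤ A * ((((n : ℝ) + 2) * s) ^ 3 * ((n : ℝ) + 2) ^ M) := by gcongr; norm_num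
      _ = _ := by ring
  refine ⟨hB, ?_⟩
  have : Tendsto (fun s : ℝ => ∑' n : ℕ,
      Real.exp (-2 * (n : ℝ) ^ 2) * (G (((n : ℝ) + 1) * s) / s ^ 3))
      (nhdsWithin 0 (Set.Ioi 0)) (nhds (∑' n : ℕ, (0 : ℝ))) := by
    refine tendsto_tsum_of_dominated_convergence (aux_summable A M) ?_ ?_
    · intro n
      have hn : (0 : ℝ) < (n : ℝ) + 1 := by positivity
      have ht : Tendsto (fun s : ℝ => ((n : ℝ) + 1) * s) (nhdsWithin 0 (Set.Ioi 0))
          (nhdsWithin 0 (Set.Ioi 0)) := by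
        refine tendsto_nhdsWithin_iff.2 ⟨?_, ?_⟩
        · have : Tendsto (fun s : ℝ => ((n : ℝ) + 1) * s) (nhds 0) (nhds (((n : ℝ) + 1) * 0)) :=
            (continuous_const.mul continuous_id).tendsto 0
          rw [mul_zero] at this
          exact this.mono_left nhdsWithin_le_nhds
        · filter_upwards [self_mem_nhdsWithin] with s hs
          exact mul_pos hn hs
      have h2 := (hG.comp ht).const_mul (Real.exp (-2 * (n : ℝ) ^ 2) * ((n : ℝ) + 1) ^ 3)
      rw [mul_zero] at h2
      refine h2.congr fun s => ?_
      simp only [Function.comp]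
      rw [mul_pow]
      have : ((n : ℝ) + 1) ^ 3 ≠ 0 := by positivity
      rw [mul_assoc, ← mul_div_assoc, mul_div_mul_left _ _ this]
    · filter_upwards [Ioc_mem_nhdsGT (zero_lt_one : (0 : ℝ) < 1)] with s hs n
      rw [Real.norm_of_nonneg]
      · exact hB s hs.1 hs.2 n
      · exact mul_nonneg (Real.exp_pos _).le (div_nonneg (hG0 _) (pow_nonneg hs.1.le 3))
  simpa using this

lemma aux_pow (τ : ℝ) (hτ : 0 < τ) : τ ^ (3 / 2 : ℝ) = (((√τ)⁻¹) ^ 3)⁻¹ := by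
  rw [inv_pow, inv_inv, Real.sqrt_eq_rpow, ← Real.rpow_natCast, ← Real.rpow_mul hτ.le]
  norm_num


/-- Let `d ≥ 2`, `σ_p` a tempered positive Borel measure on `(0,∞)` and
`σ_c` a finite positive Borel measure on `[0,(d-1)/2]`. Then the following are equivalent:
(a) `σ_c = 0` and `σ_p((0,ε])/ε³ → 0` as `ε → 0⁺` (spectral hyperuniformity);
(b) `τ^{3/2} (∫ e^{-2τλ²} dσ_p(λ) + ∫ e^{2τλ²} dσ_c(λ)) → 0` as `τ → +∞`
(heat kernel hyperuniformity), the integrals being taken in `[0,∞]`. -/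
theorem stmt13 (d : ℕ) (hd : 2 ≤ d)
    (σp : Measure ℝ) (hp0 : σp (Set.Iic 0) = 0)
    (hpfin : ∀ r : ℝ, 0 < r → σp (Set.Ioc 0 r) < ⊤)
    (hptemp : ∃ C N : ℝ, 0 < C ∧ 0 < N ∧
      ∀ r : ℝ, 1 ≤ r → σp (Set.Ioc 0 r) ≤ ENNReal.ofReal (C * (1 + r) ^ N))
    (σc : Measure ℝ) [IsFiniteMeasure σc]
    (hcsupp : σc ((Set.Icc (0 : ℝ) (((d : ℝ) - 1) / 2))ᶜ) = 0) :
    (σc = 0 ∧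
        Tendsto (fun ε : ℝ => (σp (Set.Ioc 0 ε)).toReal / ε ^ 3)
          (nhdsWithin 0 (Set.Ioi 0)) (nhds 0)) ↔
      Tendsto (fun τ : ℝ =>
          ENNReal.ofReal (τ ^ (3 / 2 : ℝ)) *
            ((∫⁻ l in Set.Ioi (0 : ℝ), ENNReal.ofReal (Real.exp (-2 * τ * l ^ 2)) ∂σp) +
              ∫⁻ l in Set.Icc (0 : ℝ) (((d : ℝ) - 1) / 2),
                ENNReal.ofReal (Real.exp (2 * τ * l ^ 2)) ∂σc))
        atTop (nhds 0) := by
  have hfin' : ∀ r : ℝ, σp (Set.Ioc 0 r) ≠ ⊤ := by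
    intro r
    rcases lt_or_ge 0 r with h | h
    · exact (hpfin r h).ne
    · rw [Set.Ioc_eq_empty (not_lt.2 h)]; simp
  constructor
  · rintro ⟨hc, hG⟩
    obtain ⟨C, N, hC, hN, htemp⟩ := hptemp
    set G : ℝ → ℝ := fun r => (σp (Set.Ioc 0 r)).toReal with hGd
    have hG0 : ∀ r, 0 ≤ G r := fun r => ENNReal.toReal_nonneg
    have hmono : ∀ a b, a ≤ b → G a ≤ G b := fun a b hab =>
      ENNReal.toReal_mono (hfin' b) (measure_mono (Set.Ioc_subset_Ioc_right hab))
    obtain ⟨A, M, hA, hb⟩ := aux_bound G hG0 hmono hG C N hC (fun r hr =>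
      ENNReal.toReal_le_of_le_ofReal (by positivity) (htemp r hr))
    obtain ⟨hB, hT⟩ := aux_dom G hG0 hG A M hA hb
    have hs : Tendsto (fun τ : ℝ => (√τ)⁻¹) atTop (nhdsWithin 0 (Set.Ioi 0)) :=
      tendsto_inv_atTop_nhdsGT_zero.comp Real.tendsto_sqrt_atTop
    have hT2 := ENNReal.tendsto_ofReal (hT.comp hs)
    rw [ENNReal.ofReal_zero] at hT2
    refine tendsto_of_tendsto_of_tendsto_of_le_of_le' tendsto_const_nhds hT2
      (Eventually.of_forall fun _ => zero_le) ?_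
    filter_upwards [eventually_ge_atTop (1 : ℝ)] with τ hτ
    have hτ0 : 0 < τ := by linarith
    have hsq : 1 ≤ √τ := Real.one_le_sqrt.2 hτ
    have hs0 : 0 < (√τ)⁻¹ := by positivity
    have hs1 : (√τ)⁻¹ ≤ 1 := inv_le_one_of_one_le₀ hsq
    have hrel : τ * ((√τ)⁻¹) ^ 2 = 1 := by
      rw [inv_pow, Real.sq_sqrt hτ0.le, mul_inv_cancel₀ hτ0.ne']
    rw [aux_pow τ hτ0, hc, Measure.restrict_zero, lintegral_zero_measure, add_zero]
    simp only [Function.comp]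
    set s := (√τ)⁻¹ with hsd
    have hnn : ∀ n : ℕ, 0 ≤ Real.exp (-2 * (n : ℝ) ^ 2) * (G (((n : ℝ) + 1) * s) / s ^ 3) :=
      fun n => mul_nonneg (Real.exp_pos _).le (div_nonneg (hG0 _) (by positivity))
    rw [ENNReal.ofReal_tsum_of_nonneg hnn
      (Summable.of_nonneg_of_le hnn (hB s hs0 hs1) (aux_summable A M))]
    calc _ ≤ ENNReal.ofReal ((s ^ 3)⁻¹) * ∑' n : ℕ, ENNReal.ofReal (Real.exp (-2 * (n : ℝ) ^ 2)) *
        σp (Set.Ioc 0 (((n : ℝ) + 1) * s)) := by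
          gcongr
          exact aux_cover σp s τ hs0 hrel
      _ = _ := by
          rw [← ENNReal.tsum_mul_left]
          refine tsum_congr fun n => ?_
          rw [← ENNReal.ofReal_toReal (hfin' (((n : ℝ) + 1) * s)),
            ← ENNReal.ofReal_mul (Real.exp_pos _).le, ← ENNReal.ofReal_mul (by positivity)]
          congr 1
          simp only [hGd]
          ring
  · intro h
    constructor
    · have hz : σc (Set.Icc (0 : ℝ) (((d : ℝ) - 1) / 2)) ≤ 0 := by
        refine ge_of_tendsto h ?_
        filter_upwards [eventually_ge_atTop (1 : ℝ)] with τ hτ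
        have h1 : (1 : ENNReal) ≤ ENNReal.ofReal (τ ^ (3 / 2 : ℝ)) := by
          rw [ENNReal.one_le_ofReal]
          exact Real.one_le_rpow hτ (by norm_num)
        have h2 : σc (Set.Icc (0 : ℝ) (((d : ℝ) - 1) / 2)) ≤
            ∫⁻ l in Set.Icc (0 : ℝ) (((d : ℝ) - 1) / 2),
                ENNReal.ofReal (Real.exp (2 * τ * l ^ 2)) ∂σc := by
          rw [← setLIntegral_one]
          refine lintegral_mono fun l => ?_
          rw [ENNReal.one_le_ofReal]
          exact Real.one_le_exp (by positivity)
        calc _ ≤ _ := h2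
          _ ≤ _ := le_add_self
          _ ≤ _ := le_mul_of_one_le_left zero_le h1
      rw [← Measure.measure_univ_eq_zero,
        ← Set.union_compl_self (Set.Icc (0 : ℝ) (((d : ℝ) - 1) / 2))]
      exact measure_union_null (le_antisymm hz zero_le) hcsupp
    · have ht : Tendsto (fun ε : ℝ => (ε⁻¹) ^ 2) (nhdsWithin 0 (Set.Ioi 0)) atTop :=
        (tendsto_pow_atTop two_ne_zero).comp tendsto_inv_nhdsGT_zero
      have h2 := ENNReal.Tendsto.const_mul (a := ENNReal.ofReal (Real.exp 2)) (h.comp ht)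
        (Or.inr ENNReal.ofReal_ne_top)
      rw [mul_zero] at h2
      have h3 : Tendsto (fun ε : ℝ => ENNReal.ofReal ((σp (Set.Ioc 0 ε)).toReal / ε ^ 3))
          (nhdsWithin 0 (Set.Ioi 0)) (nhds 0) := by
        refine tendsto_of_tendsto_of_tendsto_of_le_of_le' tendsto_const_nhds h2
          (Eventually.of_forall fun _ => zero_le) ?_
        filter_upwards [self_mem_nhdsWithin] with ε hε
        have hε : 0 < ε := hε
        simp only [Function.comp]
        have hI : ENNReal.ofReal (Real.exp (-2)) * σp (Set.Ioc 0 ε) ≤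
            ∫⁻ l in Set.Ioi (0 : ℝ), ENNReal.ofReal (Real.exp (-2 * (ε⁻¹) ^ 2 * l ^ 2)) ∂σp := by
          rw [← setLIntegral_const]
          refine le_trans ?_ (lintegral_mono_set (fun x (hx : x ∈ Set.Ioc 0 ε) => hx.1))
          refine setLIntegral_mono' measurableSet_Ioc fun l hl => ?_
          apply ENNReal.ofReal_le_ofReal
          apply Real.exp_le_exp.2
          have : (ε⁻¹ * l) ^ 2 ≤ 1 := by
            apply pow_le_one₀ (mul_nonneg (by positivity) hl.1.le)
            rw [inv_mul_le_iff₀ hε, mul_one]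
            exact hl.2
          rw [mul_pow] at this
          linarith
        have hp : (((ε⁻¹) ^ 2 : ℝ) ^ (3 / 2 : ℝ)) = (ε ^ 3)⁻¹ := by
          rw [aux_pow _ (by positivity), Real.sqrt_sq (by positivity), inv_inv]
        rw [hp]
        calc ENNReal.ofReal ((σp (Set.Ioc 0 ε)).toReal / ε ^ 3)
            = ENNReal.ofReal (Real.exp 2) * (ENNReal.ofReal ((ε ^ 3)⁻¹) *
              (ENNReal.ofReal (Real.exp (-2)) * σp (Set.Ioc 0 ε))) := by
              conv_rhs => rw [← ENNReal.ofReal_toReal (hfin' ε)]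
              rw [← ENNReal.ofReal_mul (Real.exp_pos _).le, ← ENNReal.ofReal_mul (by positivity),
                ← ENNReal.ofReal_mul (Real.exp_pos _).le]
              congr 1
              rw [Real.exp_neg]
              field_simp
          _ ≤ _ := by
              gcongr
              exact hI.trans le_self_add
      have h4 := (ENNReal.tendsto_toReal ENNReal.zero_ne_top).comp h3
      rw [ENNReal.toReal_zero] at h4
      refine h4.congr' ?_
      filter_upwards [self_mem_nhdsWithin] with ε hε
      have hε : 0 < ε := hε
      exact ENNReal.toReal_ofReal (by positivity)
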